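/- arXiv:2604.24692 — 3 statements merged into one kernel-verified Lean document; each statement's English description precedes it below -/
import Mathlib

section
/- Fix β > 0, B > 0 and d ∈ ℕ. Then there exists a constant C > 0, depending only on β, B and d, with the following property: for every n ≥ 1 and every pair of symmetric matrices W, W̃ ∈ ℝ^{n×n} with zero diagonal such that (i) |W_{ij}| ≤ B for all i,j, (ii) each row of W has at most d nonzero entries, and (iii) |W̃_{ij} − W_{ij}| ≤ ε·|W_{ij}| for all i,j, for some ε with 0 < ε ≤ 1, one has ‖H(β; W̃) − H(β; W)‖_F ≤ C·ε·√N, where N = #{(i,j) : W_{ij} ≠ 0} is the number of nonzero entries of W (twice the number of edges). -/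
open Matrix Real

/-- Diagonal part `D̃(β)` of the Bethe–Hessian: `D̃(β)_{ii} = Σ_j sinh²(β W_{ij})`. -/
noncomputable def betheDTilde {n : ℕ} (W : Matrix (Fin n) (Fin n) ℝ) (β : ℝ) :
    Matrix (Fin n) (Fin n) ℝ :=
  Matrix.diagonal (fun i => ∑ j, Real.sinh (β * W i j) ^ 2)

/-- Off-diagonal part `S(β)` of the Bethe–Hessian: `S(β)_{ij} = sinh(β W_{ij}) cosh(β W_{ij})`. -/
noncomputable def betheS {n : ℕ} (W : Matrix (Fin n) (Fin n) ℝ) (β : ℝ) :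
    Matrix (Fin n) (Fin n) ℝ :=
  Matrix.of fun i j => Real.sinh (β * W i j) * Real.cosh (β * W i j)

/-- The Bethe–Hessian `H(β) = I + D̃(β) − S(β)`. -/
noncomputable def betheH {n : ℕ} (W : Matrix (Fin n) (Fin n) ℝ) (β : ℝ) :
    Matrix (Fin n) (Fin n) ℝ :=
  1 + betheDTilde W β - betheS W β

/-- Frobenius norm of a real matrix. -/
noncomputable def frobNorm {n : ℕ} (A : Matrix (Fin n) (Fin n) ℝ) : ℝ :=
  Real.sqrt (∑ i, ∑ j, (A i j) ^ 2)

/-- Smallest eigenvalue of a real matrix: infimum of the set of (real) eigenvalues. -/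
noncomputable def lambdaMin {n : ℕ} (A : Matrix (Fin n) (Fin n) ℝ) : ℝ :=
  sInf {r : ℝ | ∃ v : Fin n → ℝ, v ≠ 0 ∧ A.mulVec v = r • v}

/-- Diagonal matrix `P(β)` with entries `(1 + D̃(β)_{ii})^{1/2}`. -/
noncomputable def betheP {n : ℕ} (W : Matrix (Fin n) (Fin n) ℝ) (β : ℝ) :
    Matrix (Fin n) (Fin n) ℝ :=
  Matrix.diagonal (fun i => Real.sqrt (1 + ∑ j, Real.sinh (β * W i j) ^ 2))

/-- The Bethe–Hessian Laplacian `L_BH(β) = I − P(β)⁻¹ S(β) P(β)⁻¹`. -/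
noncomputable def betheLBH {n : ℕ} (W : Matrix (Fin n) (Fin n) ℝ) (β : ℝ) :
    Matrix (Fin n) (Fin n) ℝ :=
  1 - (betheP W β)⁻¹ * betheS W β * (betheP W β)⁻¹


/-
The hyperbolic functions are Lipschitz on bounded intervals, so every entry of the matrices `S` and
`(sinh² (β W i j))` moves by at most a constant times the change of the corresponding weight. This
bounds the change of `S` in Frobenius norm at once. For the diagonal part, Cauchy–Schwarz on a row
with at most `d` changed weights costs a factor `√d` when passing to row sums. Hence `H(β; ·)` is
Lipschitz in the Frobenius norm under sparse changes of bounded weights, and a relative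
perturbation of size `ε` has Frobenius norm at most `ε ‖W‖ ≤ ε B √N`.
-/

section Hyperbolic

variable {R x y : ℝ}

lemma abs_sinh_sub_sinh_le (hx : |x| ≤ R) (hy : |y| ≤ R) :
    |sinh y - sinh x| ≤ cosh R * |y - x| := by
  have deriv_le : ∀ z ∈ Set.Icc (-R) R, ‖deriv sinh z‖ ≤ cosh R := fun z hz => by
    rw [Real.deriv_sinh, norm_eq_abs, abs_of_pos (cosh_pos z)]
    exact cosh_le_cosh.2 ((abs_le.2 hz).trans (le_abs_self R))
  exact (convex_Icc (-R) R).norm_image_sub_le_of_norm_deriv_le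
    (fun z _ => differentiable_sinh z) deriv_le (abs_le.1 hx) (abs_le.1 hy)

lemma abs_cosh_sub_cosh_le (hx : |x| ≤ R) (hy : |y| ≤ R) :
    |cosh y - cosh x| ≤ sinh R * |y - x| := by
  have deriv_le : ∀ z ∈ Set.Icc (-R) R, ‖deriv cosh z‖ ≤ sinh R := fun z hz => by
    rw [Real.deriv_cosh, norm_eq_abs, abs_sinh]
    exact sinh_le_sinh.2 (abs_le.2 hz)
  exact (convex_Icc (-R) R).norm_image_sub_le_of_norm_deriv_le
    (fun z _ => differentiable_cosh z) deriv_le (abs_le.1 hx) (abs_le.1 hy)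

lemma abs_two_mul_le (hx : |x| ≤ R) : |2 * x| ≤ 2 * R := by
  rw [abs_mul, abs_two]
  gcongr

lemma abs_sinh_mul_cosh_sub_le (hx : |x| ≤ R) (hy : |y| ≤ R) :
    |sinh y * cosh y - sinh x * cosh x| ≤ cosh (2 * R) * |y - x| := by
  have double_angle :
      sinh y * cosh y - sinh x * cosh x = (sinh (2 * y) - sinh (2 * x)) / 2 := by
    rw [sinh_two_mul, sinh_two_mul]
    ring
  have lipschitz := abs_sinh_sub_sinh_le (abs_two_mul_le hx) (abs_two_mul_le hy)
  rw [← mul_sub, abs_mul, abs_two] at lipschitz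
  rw [double_angle, abs_div, abs_two]
  linarith

lemma abs_sinh_sq_sub_sinh_sq_le (hx : |x| ≤ R) (hy : |y| ≤ R) :
    |sinh y ^ 2 - sinh x ^ 2| ≤ sinh (2 * R) * |y - x| := by
  have double_angle : sinh y ^ 2 - sinh x ^ 2 = (cosh (2 * y) - cosh (2 * x)) / 2 := by
    rw [cosh_two_mul, cosh_two_mul, cosh_sq, cosh_sq]
    ring
  have lipschitz := abs_cosh_sub_cosh_le (abs_two_mul_le hx) (abs_two_mul_le hy)
  rw [← mul_sub, abs_mul, abs_two] at lipschitz
  rw [double_angle, abs_div, abs_two]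
  linarith

end Hyperbolic

lemma card_filter_ne_zero_le_of_norm_le_mul {ι E F : Type*} [Fintype ι]
    [NormedAddCommGroup E] [DecidableEq E] [SeminormedAddCommGroup F] [DecidableEq F]
    {v : ι → E} {w : ι → F} {c : ℝ} (h : ∀ i, ‖v i‖ ≤ c * ‖w i‖) :
    (Finset.univ.filter fun i => v i ≠ 0).card ≤ (Finset.univ.filter fun i => w i ≠ 0).card := by
  refine Finset.card_le_card (Finset.monotone_filter_right _ fun i _ hv hw => hv ?_)
  simpa [hw] using h i

section FrobeniusNorm

open scoped Matrix.Norms.Frobenius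

variable {m n E F : Type*} [Fintype m] [Fintype n]
  [SeminormedAddCommGroup E] [SeminormedAddCommGroup F]

lemma frobenius_norm_eq_sqrt (A : Matrix m n E) : ‖A‖ = √(∑ i, ∑ j, ‖A i j‖ ^ 2) := by
  simp only [frobenius_norm_def, rpow_two, sqrt_eq_rpow]

lemma frobenius_norm_sq (A : Matrix m n E) : ‖A‖ ^ 2 = ∑ i, ∑ j, ‖A i j‖ ^ 2 := by
  rw [frobenius_norm_eq_sqrt, sq_sqrt (by positivity)]

lemma frobenius_norm_le_mul {A : Matrix m n E} {B : Matrix m n F} {c : ℝ} (hc : 0 ≤ c)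
    (h : ∀ i j, ‖A i j‖ ≤ c * ‖B i j‖) : ‖A‖ ≤ c * ‖B‖ := by
  refine le_of_sq_le_sq ?_ (by positivity)
  rw [mul_pow, frobenius_norm_sq, frobenius_norm_sq]
  simp only [Finset.mul_sum, ← mul_pow]
  gcongr with i _ j _
  exact h i j

variable [DecidableEq E]

lemma frobenius_norm_le_mul_sqrt_card {A : Matrix m n E} {c : ℝ} (hc : 0 ≤ c)
    (h : ∀ i j, ‖A i j‖ ≤ c) :
    ‖A‖ ≤ c * √(Finset.univ.filter fun p : m × n => A p.1 p.2 ≠ 0).card := by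
  refine le_of_sq_le_sq ?_ (by positivity)
  rw [mul_pow, sq_sqrt (Nat.cast_nonneg _), frobenius_norm_sq, ← Fintype.sum_prod_type',
    mul_comm, ← nsmul_eq_mul]
  have norm_sq_eq_zero : ∀ p : m × n, ‖A p.1 p.2‖ ^ 2 ≠ 0 → A p.1 p.2 ≠ 0 := by
    rintro p hp hA
    simp [hA] at hp
  rw [← Finset.sum_filter_of_ne fun p _ => norm_sq_eq_zero p]
  refine Finset.sum_le_card_nsmul _ _ _ fun p _ => ?_
  gcongr
  exact h p.1 p.2

lemma norm_sum_sq_le_card_mul_sum_norm_sq (v : n → E) :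
    ‖∑ j, v j‖ ^ 2 ≤ (Finset.univ.filter fun j => v j ≠ 0).card * ∑ j, ‖v j‖ ^ 2 := by
  calc ‖∑ j, v j‖ ^ 2
      = ‖∑ j with v j ≠ 0, v j‖ ^ 2 := by rw [Finset.sum_filter_ne_zero]
    _ ≤ (∑ j with v j ≠ 0, ‖v j‖) ^ 2 := by gcongr; exact norm_sum_le _ _
    _ ≤ _ * ∑ j with v j ≠ 0, ‖v j‖ ^ 2 := sq_sum_le_card_mul_sum_sq
    _ ≤ _ * ∑ j, ‖v j‖ ^ 2 := by
        gcongr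
        exact Finset.filter_subset _ _

lemma frobenius_norm_diagonal_sum_le [DecidableEq m] {A : Matrix m n E} {d : ℕ}
    (hd : ∀ i, (Finset.univ.filter fun j => A i j ≠ 0).card ≤ d) :
    ‖diagonal fun i => ∑ j, A i j‖ ≤ √d * ‖A‖ := by
  refine le_of_sq_le_sq ?_ (by positivity)
  rw [frobenius_norm_diagonal, PiLp.norm_sq_eq_of_L2, mul_pow, sq_sqrt (Nat.cast_nonneg d),
    frobenius_norm_sq, Finset.mul_sum]
  gcongr with i
  refine (norm_sum_sq_le_card_mul_sum_norm_sq (A i)).trans ?_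
  gcongr
  exact hd i

end FrobeniusNorm

section BetheHessian

open scoped Matrix.Norms.Frobenius

variable {n d : ℕ} {W Wt : Matrix (Fin n) (Fin n) ℝ} {β B R : ℝ}

lemma frobNorm_eq_norm (A : Matrix (Fin n) (Fin n) ℝ) : frobNorm A = ‖A‖ := by
  simp only [frobNorm, frobenius_norm_eq_sqrt, norm_eq_abs, sq_abs]

lemma norm_betheS_sub_le (hW : ∀ i j, |β * W i j| ≤ R) (hWt : ∀ i j, |β * Wt i j| ≤ R) :
    ‖betheS Wt β - betheS W β‖ ≤ cosh (2 * R) * |β| * ‖Wt - W‖ := by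
  refine frobenius_norm_le_mul (by positivity) fun i j => ?_
  have lipschitz := abs_sinh_mul_cosh_sub_le (hW i j) (hWt i j)
  rwa [← mul_sub, abs_mul, ← mul_assoc] at lipschitz

lemma norm_betheDTilde_sub_le (hR : 0 ≤ R) (hW : ∀ i j, |β * W i j| ≤ R)
    (hWt : ∀ i j, |β * Wt i j| ≤ R)
    (hd : ∀ i, (Finset.univ.filter fun j => (Wt - W) i j ≠ 0).card ≤ d) :
    ‖betheDTilde Wt β - betheDTilde W β‖ ≤ √d * (sinh (2 * R) * |β| * ‖Wt - W‖) := by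
  set A : Matrix (Fin n) (Fin n) ℝ :=
    of fun i j => sinh (β * Wt i j) ^ 2 - sinh (β * W i j) ^ 2 with hA
  have entry_le : ∀ i j, ‖A i j‖ ≤ sinh (2 * R) * |β| * ‖(Wt - W) i j‖ := fun i j => by
    have lipschitz := abs_sinh_sq_sub_sinh_sq_le (hW i j) (hWt i j)
    rwa [← mul_sub, abs_mul, ← mul_assoc] at lipschitz
  have hdA : ∀ i, (Finset.univ.filter fun j => A i j ≠ 0).card ≤ d := fun i =>
    (card_filter_ne_zero_le_of_norm_le_mul (entry_le i)).trans (hd i)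
  have diagonal_eq : betheDTilde Wt β - betheDTilde W β = diagonal fun i => ∑ j, A i j := by
    simp only [betheDTilde, diagonal_sub, hA, of_apply, Finset.sum_sub_distrib]
  calc ‖betheDTilde Wt β - betheDTilde W β‖
      ≤ √d * ‖A‖ := diagonal_eq ▸ frobenius_norm_diagonal_sum_le hdA
    _ ≤ √d * (sinh (2 * R) * |β| * ‖Wt - W‖) := by
        gcongr
        exact frobenius_norm_le_mul (by positivity) entry_le

lemma norm_betheH_sub_le (hR : 0 ≤ R) (hW : ∀ i j, |β * W i j| ≤ R)
    (hWt : ∀ i j, |β * Wt i j| ≤ R)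
    (hd : ∀ i, (Finset.univ.filter fun j => (Wt - W) i j ≠ 0).card ≤ d) :
    ‖betheH Wt β - betheH W β‖
      ≤ (√d * sinh (2 * R) + cosh (2 * R)) * |β| * ‖Wt - W‖ := by
  have split : betheH Wt β - betheH W β
      = (betheDTilde Wt β - betheDTilde W β) - (betheS Wt β - betheS W β) := by
    simp only [betheH]
    abel
  calc ‖betheH Wt β - betheH W β‖
      ≤ ‖betheDTilde Wt β - betheDTilde W β‖ + ‖betheS Wt β - betheS W β‖ :=
        split ▸ norm_sub_le _ _
    _ ≤ √d * (sinh (2 * R) * |β| * ‖Wt - W‖) + cosh (2 * R) * |β| * ‖Wt - W‖ :=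
        add_le_add (norm_betheDTilde_sub_le hR hW hWt hd) (norm_betheS_sub_le hW hWt)
    _ = (√d * sinh (2 * R) + cosh (2 * R)) * |β| * ‖Wt - W‖ := by ring

theorem betheH_perturbation_general {ε E : ℝ} (hB : 0 ≤ B) (hε : 0 ≤ ε) (hεE : ε ≤ E)
    (hW : ∀ i j, |W i j| ≤ B)
    (hd : ∀ i, (Finset.univ.filter fun j => W i j ≠ 0).card ≤ d)
    (hWt : ∀ i j, |Wt i j - W i j| ≤ ε * |W i j|) :
    frobNorm (betheH Wt β - betheH W β)
      ≤ (√d * sinh (2 * (|β| * ((1 + E) * B))) + cosh (2 * (|β| * ((1 + E) * B)))) * |β| * B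
        * ε * √(Finset.univ.filter fun p : Fin n × Fin n => W p.1 p.2 ≠ 0).card := by
  have hE : 0 ≤ E := hε.trans hεE
  set R := |β| * ((1 + E) * B)
  have scaled_le : ∀ w, |w| ≤ (1 + E) * B → |β * w| ≤ R := fun w hw => by
    rw [abs_mul]
    exact mul_le_mul_of_nonneg_left hw (abs_nonneg β)
  have hWR : ∀ i j, |W i j| ≤ (1 + E) * B := fun i j =>
    (hW i j).trans (le_mul_of_one_le_left hB (by linarith))
  have hWtR : ∀ i j, |Wt i j| ≤ (1 + E) * B := fun i j => calc
    |Wt i j| ≤ |W i j| + |Wt i j - W i j| := by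
      simpa only [add_sub_cancel] using abs_add_le (W i j) (Wt i j - W i j)
    _ ≤ B + E * B := by grw [hWt i j, hW i j, hεE]
    _ = (1 + E) * B := by ring
  have entry_le : ∀ i j, ‖(Wt - W) i j‖ ≤ ε * ‖W i j‖ := hWt
  have hd_sub : ∀ i, (Finset.univ.filter fun j => (Wt - W) i j ≠ 0).card ≤ d := fun i =>
    (card_filter_ne_zero_le_of_norm_le_mul (entry_le i)).trans (hd i)
  rw [frobNorm_eq_norm]
  grw [norm_betheH_sub_le (by positivity) (fun i j => scaled_le _ (hWR i j))
    (fun i j => scaled_le _ (hWtR i j)) hd_sub, frobenius_norm_le_mul hε entry_le,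
    frobenius_norm_le_mul_sqrt_card hB hW]
  exact le_of_eq (by ring)

end BetheHessian

/-- Perturbation of the Bethe-Hessian under edgewise-relative weight noise:
on bounded-weight, bounded-degree graphs,
‖H(β; W̃) - H(β; W)‖_F ≤ C·ε·√N where N is the number of nonzero entries of W. -/
theorem betheH_perturbation (β B : ℝ) (hβ : 0 < β) (hB : 0 < B) (d : ℕ) :
    ∃ C > (0 : ℝ), ∀ (n : ℕ), 1 ≤ n →
      ∀ (W Wt : Matrix (Fin n) (Fin n) ℝ),
        W.IsSymm → (∀ i, W i i = 0) → Wt.IsSymm → (∀ i, Wt i i = 0) →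
        (∀ i j, |W i j| ≤ B) →
        (∀ i, (Finset.univ.filter (fun j => W i j ≠ 0)).card ≤ d) →
        ∀ ε : ℝ, 0 < ε → ε ≤ 1 →
          (∀ i j, |Wt i j - W i j| ≤ ε * |W i j|) →
          frobNorm (betheH Wt β - betheH W β)
            ≤ C * ε * Real.sqrt
                ((Finset.univ.filter
                  (fun p : Fin n × Fin n => W p.1 p.2 ≠ 0)).card) := by
  refine ⟨_, ?_, fun n _ W Wt _ _ _ _ hW hd ε hε hε1 hWt =>
    betheH_perturbation_general hB.le hε.le hε1 hW hd hWt⟩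
  positivity
end

section
/- Let n ≥ 1 and let W ∈ ℝ^{n×n} be a symmetric real matrix with zero diagonal, with Bethe–Hessian H(β). Suppose there exists β₁ > 0 with λ_min(H(β₁)) < 0. Then there exists a Nishimori temperature β_N ∈ (0, β₁) satisfying the singularity condition λ_min(H(β_N)) = 0. (This follows from the intermediate value theorem, since λ_min(H(0)) = 1 > 0 as H(0) = I, and β ↦ λ_min(H(β)) is continuous.) -/
open Matrix Real

/-!
A self-adjoint operator attains the minimum of its quadratic form on the unit sphere at an
eigenvector, so on real symmetric matrices `lambdaMin` is a minimum over a fixed compact set of a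
function depending continuously on the matrix, hence is itself continuous. Since `betheH W 0 = 1`
has smallest eigenvalue `1`, the intermediate value theorem on `[0, β₁]` yields a Nishimori
temperature.
-/

section RayleighInf

variable {𝕜 E : Type*} [RCLike 𝕜] [NormedAddCommGroup E] [InnerProductSpace 𝕜 E]

/-- The bottom of the numerical range of `T`: the infimum of `re ⟪T x, x⟫` over the unit sphere.
The unit sphere, rather than a quotient by `‖x‖ ^ 2`, makes the infimum one over a compact set. -/
noncomputable def rayleighInf (T : E →L[𝕜] E) : ℝ :=
  sInf (T.reApplyInnerSelf '' Metric.sphere 0 1)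

theorem continuous_rayleighInf [ProperSpace E] :
    Continuous (rayleighInf : (E →L[𝕜] E) → ℝ) := by
  refine (isCompact_sphere (0 : E) 1).continuous_sInf ?_
  have hT : Continuous fun p : (E →L[𝕜] E) × E => p.1 p.2 := continuous_fst.clm_apply continuous_snd
  exact RCLike.continuous_re.comp (hT.inner continuous_snd)

theorem bddBelow_reApplyInnerSelf_image_sphere (T : E →L[𝕜] E) :
    BddBelow (T.reApplyInnerSelf '' Metric.sphere 0 1) := by
  refine ⟨-‖T‖, ?_⟩
  rintro _ ⟨x, hx, rfl⟩
  have hx1 : ‖x‖ = 1 := mem_sphere_zero_iff_norm.1 hx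
  refine neg_le_of_abs_le ?_
  calc |T.reApplyInnerSelf x| ≤ ‖T x‖ * ‖x‖ :=
        (RCLike.abs_re_le_norm _).trans (norm_inner_le_norm _ _)
    _ ≤ ‖T‖ := by simpa [hx1] using T.le_opNorm x

theorem rayleighInf_le_of_hasEigenvalue {T : E →L[𝕜] E} {r : ℝ}
    (hr : Module.End.HasEigenvalue (T : E →ₗ[𝕜] E) (r : 𝕜)) : rayleighInf T ≤ r := by
  obtain ⟨v, hv⟩ := hr.exists_hasEigenvector
  set u : E := (‖v‖⁻¹ : 𝕜) • v
  have hu : ‖u‖ = 1 := norm_smul_inv_norm hv.2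
  have hTv : T v = (r : 𝕜) • v := hv.apply_eq_smul
  have hTu : T u = (r : 𝕜) • u := by rw [map_smul, hTv, smul_comm]
  refine csInf_le (bddBelow_reApplyInnerSelf_image_sphere T)
    ⟨u, mem_sphere_zero_iff_norm.2 hu, ?_⟩
  simp [T.reApplyInnerSelf_apply, hTu, inner_smul_left, inner_self_eq_norm_sq_to_K, hu]

theorem hasEigenvalue_rayleighInf [ProperSpace E] [Nontrivial E] {T : E →L[𝕜] E}
    (hT : IsSelfAdjoint T) :
    Module.End.HasEigenvalue (T : E →ₗ[𝕜] E) (rayleighInf T : 𝕜) := by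
  have hne : (Metric.sphere (0 : E) 1).Nonempty :=
    Set.nonempty_coe_sort.1 (NormedSpace.sphere_nonempty_rclike 𝕜 zero_le_one)
  obtain ⟨x, hx, hinf, hmin⟩ := (isCompact_sphere (0 : E) 1).exists_sInf_image_eq_and_le hne
    T.reApplyInnerSelf_continuous.continuousOn
  have hx1 : ‖x‖ = 1 := mem_sphere_zero_iff_norm.1 hx
  have hx0 : x ≠ 0 := ne_zero_of_mem_unit_sphere ⟨x, hx⟩
  have hquot : T.rayleighQuotient x = rayleighInf T := by
    simp [ContinuousLinearMap.rayleighQuotient, rayleighInf, hinf, hx1]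
  have hextr : IsLocalExtrOn T.reApplyInnerSelf (Metric.sphere 0 ‖x‖) x := by
    rw [hx1]
    exact Or.inl (IsMinOn.localize hmin)
  rw [← hquot]
  exact Module.End.hasEigenvalue_of_hasEigenvector (hT.hasEigenvector_of_isLocalExtrOn hx0 hextr)

theorem isLeast_rayleighInf [ProperSpace E] [Nontrivial E] {T : E →L[𝕜] E}
    (hT : IsSelfAdjoint T) :
    IsLeast {r : ℝ | Module.End.HasEigenvalue (T : E →ₗ[𝕜] E) (r : 𝕜)} (rayleighInf T) :=
  ⟨hasEigenvalue_rayleighInf hT, fun _ => rayleighInf_le_of_hasEigenvalue⟩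

end RayleighInf

section ToEuclideanCLM

variable {𝕜 ι : Type*} [RCLike 𝕜] [Fintype ι] [DecidableEq ι] {A : Matrix ι ι 𝕜}

theorem continuous_toEuclideanCLM : Continuous (toEuclideanCLM (n := ι) (𝕜 := 𝕜)) :=
  LinearMap.continuous_of_finiteDimensional
    (toEuclideanCLM (n := ι) (𝕜 := 𝕜)).toAlgEquiv.toLinearMap

theorem isSelfAdjoint_toEuclideanCLM (hA : A.IsHermitian) :
    IsSelfAdjoint (toEuclideanCLM (𝕜 := 𝕜) A) :=
  IsSelfAdjoint.map hA.isSelfAdjoint _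

theorem hasEigenvalue_toEuclideanCLM_iff {r : 𝕜} :
    Module.End.HasEigenvalue
        (toEuclideanCLM (𝕜 := 𝕜) A : EuclideanSpace 𝕜 ι →ₗ[𝕜] EuclideanSpace 𝕜 ι) r ↔
      ∃ v : ι → 𝕜, v ≠ 0 ∧ A *ᵥ v = r • v := by
  constructor
  · intro h
    obtain ⟨v, hv⟩ := h.exists_hasEigenvector
    exact ⟨v.ofLp, by simpa using hv.2, congrArg WithLp.ofLp hv.apply_eq_smul⟩
  · rintro ⟨v, hv, hAv⟩
    exact Module.End.hasEigenvalue_of_hasEigenvector (x := WithLp.toLp 2 v)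
      ⟨Module.End.mem_eigenspace_iff.2 (congrArg (WithLp.toLp 2) hAv), by simpa using hv⟩

end ToEuclideanCLM

section LambdaMin

variable {n : ℕ}

theorem lambdaMin_eq_rayleighInf [NeZero n] {A : Matrix (Fin n) (Fin n) ℝ} (hA : A.IsHermitian) :
    lambdaMin A = rayleighInf (toEuclideanCLM (𝕜 := ℝ) A) := by
  have hleast := isLeast_rayleighInf (isSelfAdjoint_toEuclideanCLM hA)
  simp only [RCLike.ofReal_real_eq_id, id_eq, hasEigenvalue_toEuclideanCLM_iff] at hleast
  exact hleast.csInf_eq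

theorem continuousOn_lambdaMin [NeZero n] :
    ContinuousOn lambdaMin {A : Matrix (Fin n) (Fin n) ℝ | A.IsHermitian} :=
  (continuous_rayleighInf.comp continuous_toEuclideanCLM).continuousOn.congr
    fun _ => lambdaMin_eq_rayleighInf

theorem lambdaMin_one [NeZero n] : lambdaMin (1 : Matrix (Fin n) (Fin n) ℝ) = 1 := by
  refine IsLeast.csInf_eq ⟨⟨1, one_ne_zero, by simp⟩, ?_⟩
  rintro r ⟨v, hv, hr⟩
  rw [one_mulVec] at hr
  exact (smul_left_injective ℝ hv ((one_smul ℝ v).trans hr)).le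

end LambdaMin

section BetheHessian

variable {n : ℕ} (W : Matrix (Fin n) (Fin n) ℝ)

theorem betheH_zero : betheH W 0 = 1 := by
  ext i j
  simp [betheH, betheDTilde, betheS]

theorem continuous_betheH : Continuous (betheH W) := by
  unfold betheH betheDTilde betheS
  fun_prop

variable {W}

theorem isHermitian_betheH (hW : W.IsSymm) (β : ℝ) : (betheH W β).IsHermitian := by
  have hD : (betheDTilde W β).IsHermitian := isHermitian_diagonal _
  have hS : (betheS W β).IsHermitian := by
    ext i j
    simp [betheS, hW.apply i j]
  exact (isHermitian_one.add hD).sub hS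

theorem continuous_lambdaMin_betheH [NeZero n] (hW : W.IsSymm) :
    Continuous fun β => lambdaMin (betheH W β) :=
  continuousOn_lambdaMin.comp_continuous (continuous_betheH W) (isHermitian_betheH hW)

end BetheHessian

theorem exists_nishimori_temperature_general {n : ℕ} (hn : 1 ≤ n)
    (W : Matrix (Fin n) (Fin n) ℝ) (hW : W.IsSymm)
    (β₁ : ℝ) (hβ₁ : 0 < β₁) (hneg : lambdaMin (betheH W β₁) < 0) :
    ∃ βN : ℝ, 0 < βN ∧ βN < β₁ ∧ lambdaMin (betheH W βN) = 0 := by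
  have : NeZero n := ⟨Nat.one_le_iff_ne_zero.1 hn⟩
  have hpos : 0 < lambdaMin (betheH W 0) := by
    rw [betheH_zero, lambdaMin_one]
    exact one_pos
  obtain ⟨βN, ⟨h0, h1⟩, hzero⟩ :=
    intermediate_value_Ioo' hβ₁.le (continuous_lambdaMin_betheH hW).continuousOn ⟨hneg, hpos⟩
  exact ⟨βN, h0, h1, hzero⟩

/-- Existence of a Nishimori temperature: if λ_min(H(β₁)) < 0 for some β₁ > 0,
then there exists β_N ∈ (0, β₁) with λ_min(H(β_N)) = 0. -/
theorem exists_nishimori_temperature {n : ℕ} (hn : 1 ≤ n)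
    (W : Matrix (Fin n) (Fin n) ℝ) (hW : W.IsSymm) (hdiag : ∀ i, W i i = 0)
    (β₁ : ℝ) (hβ₁ : 0 < β₁) (hneg : lambdaMin (betheH W β₁) < 0) :
    ∃ βN : ℝ, 0 < βN ∧ βN < β₁ ∧ lambdaMin (betheH W βN) = 0 :=
  exists_nishimori_temperature_general hn W hW β₁ hβ₁ hneg
end

section
/- (Stability of the Nishimori temperature under noise.) Let n ≥ 1 and let W ∈ ℝ^{n×n} be a symmetric real matrix with zero diagonal, with Bethe–Hessian H(β; W), and let f(β) = λ_min(H(β; W)). Suppose β_N > 0 satisfies f(β_N) = 0, that f is differentiable at β_N, and that f'(β_N) ≠ 0 (the non-degeneracy condition). Then there exist constants C > 0 and ε₀ > 0 such that for every ε with 0 < ε ≤ ε₀ and every symmetric matrix W̃ ∈ ℝ^{n×n} with zero diagonal satisfying the edgewise perturbation bound |W̃_{ij} − W_{ij}| ≤ ε·|W_{ij}| for all i,j, there exists β̃_N > 0 with λ_min(H(β̃_N; W̃)) = 0 and |β̃_N − β_N| ≤ C·ε. -/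
open Matrix Real

/-!
Let `F (W, β) = λ_min (H(β; W))`. By the Rayleigh bound, `λ_min` is Lipschitz on symmetric matrices,
and `(W, β) ↦ H(β; W)` is smooth, so `F` is locally Lipschitz. Hence `F (W̃, ·)` is continuous and
uniformly within `O(ε)` of `F (W, ·)` near `β_N`. As `F (W, ·)` crosses zero at `β_N` with nonzero
slope, it already exceeds this error, with opposite signs, at two points `β_N ± O(ε)`, and the
intermediate value theorem gives a zero of `F (W̃, ·)` between them.
-/

section Zeros

open Filter Set Topology

variable {f : ℝ → ℝ} {f' x₀ : ℝ} {U : Set ℝ}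

lemma eventually_exists_zero_of_hasDerivAt_of_pos (hf : HasDerivAt f f' x₀) (hf' : 0 < f')
    (h₀ : f x₀ = 0) (hU : U ∈ 𝓝 x₀) :
    ∀ᶠ δ in 𝓝[≥] (0 : ℝ), ∀ g : ℝ → ℝ, ContinuousOn g U → (∀ x ∈ U, |g x - f x| ≤ δ) →
      ∃ x ∈ U, g x = 0 ∧ |x - x₀| ≤ 2 / f' * δ := by
  have hlin : ∀ᶠ x in 𝓝 x₀, |f x - (x - x₀) * f'| ≤ f' / 2 * |x - x₀| := by
    simpa [h₀] using hf.isLittleO.def (half_pos hf')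
  obtain ⟨r, hr, hball⟩ := Metric.nhds_basis_closedBall.eventually_iff.1 (hlin.and hU)
  filter_upwards [Ico_mem_nhdsGE (show 0 < r * f' / 2 by positivity)] with δ ⟨hδ₀, hδ⟩ g hg hgf
  obtain ⟨h, rfl⟩ : ∃ h, δ = f' / 2 * h := ⟨2 / f' * δ, by field_simp⟩
  have hh₀ : 0 ≤ h := nonneg_of_mul_nonneg_right hδ₀ (half_pos hf')
  have hhr : h ≤ r := by nlinarith
  have hIcc : Icc (x₀ - h) (x₀ + h) ⊆ Metric.closedBall x₀ r := by
    rw [← Real.closedBall_eq_Icc]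
    exact Metric.closedBall_subset_closedBall hhr
  have hIccU : Icc (x₀ - h) (x₀ + h) ⊆ U := fun x hx ↦ (hball (hIcc hx)).2
  have hleft : x₀ - h ∈ Icc (x₀ - h) (x₀ + h) := left_mem_Icc.2 (by linarith)
  have hright : x₀ + h ∈ Icc (x₀ - h) (x₀ + h) := right_mem_Icc.2 (by linarith)
  have hg_left : g (x₀ - h) ≤ 0 := by
    have hfx := (abs_le.1 (hball (hIcc hleft)).1).2
    have hgx := (abs_le.1 (hgf _ (hIccU hleft))).2
    rw [sub_sub_cancel_left, abs_neg, abs_of_nonneg hh₀] at hfx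
    linarith
  have hg_right : 0 ≤ g (x₀ + h) := by
    have hfx := (abs_le.1 (hball (hIcc hright)).1).1
    have hgx := (abs_le.1 (hgf _ (hIccU hright))).1
    rw [add_sub_cancel_left, abs_of_nonneg hh₀] at hfx
    linarith
  obtain ⟨x, hx, hgx⟩ :=
    intermediate_value_Icc (by linarith) (hg.mono hIccU) ⟨hg_left, hg_right⟩
  refine ⟨x, hIccU hx, hgx, ?_⟩
  calc |x - x₀| ≤ h := abs_le.2 ⟨by linarith [hx.1], by linarith [hx.2]⟩
    _ = 2 / f' * (f' / 2 * h) := by field_simp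

lemma eventually_exists_zero_of_hasDerivAt (hf : HasDerivAt f f' x₀) (hf' : f' ≠ 0)
    (h₀ : f x₀ = 0) (hU : U ∈ 𝓝 x₀) :
    ∀ᶠ δ in 𝓝[≥] (0 : ℝ), ∀ g : ℝ → ℝ, ContinuousOn g U → (∀ x ∈ U, |g x - f x| ≤ δ) →
      ∃ x ∈ U, g x = 0 ∧ |x - x₀| ≤ 2 / |f'| * δ := by
  rcases hf'.lt_or_gt with hneg | hpos
  · filter_upwards [eventually_exists_zero_of_hasDerivAt_of_pos hf.neg (neg_pos.2 hneg)
      (by simp [h₀]) hU] with δ hδ g hg hgf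
    obtain ⟨x, hxU, hgx, hx⟩ := hδ (-g) hg.neg fun x hx ↦ by
      rw [Pi.neg_apply, Pi.neg_apply, neg_sub_neg, abs_sub_comm]
      exact hgf x hx
    exact ⟨x, hxU, neg_eq_zero.1 hgx, by rwa [abs_of_neg hneg]⟩
  · simpa only [abs_of_pos hpos] using
      eventually_exists_zero_of_hasDerivAt_of_pos hf hpos h₀ hU

lemma exists_eventually_exists_zero_of_locallyLipschitzOn {X : Type*} [PseudoMetricSpace X]
    {F : X × ℝ → ℝ} {S : Set X} {a : X} (hF : LocallyLipschitzOn (S ×ˢ univ) F) (ha : a ∈ S)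
    (hderiv : HasDerivAt (fun x ↦ F (a, x)) f' x₀) (hf' : f' ≠ 0) (h₀ : F (a, x₀) = 0)
    (hU : U ∈ 𝓝 x₀) :
    ∃ C > 0, ∀ᶠ y in 𝓝[S] a, ∃ x ∈ U, F (y, x) = 0 ∧ |x - x₀| ≤ C * dist y a := by
  obtain ⟨K, t, ht, hK⟩ := hF (x := (a, x₀)) ⟨ha, mem_univ _⟩
  rw [nhdsWithin_prod_eq, nhdsWithin_univ] at ht
  obtain ⟨s, hs, V, hV, hsV⟩ := mem_prod_iff.1 ht
  have has : a ∈ s := mem_of_mem_nhdsWithin ha hs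
  have hdist : Tendsto (fun y ↦ (K + 1) * dist y a) (𝓝[S] a) (𝓝[≥] 0) := by
    have hcont : Continuous fun y ↦ (K + 1) * dist y a := by fun_prop
    have hnonneg (y : X) : (K + 1) * dist y a ∈ Ici 0 := mem_Ici.2 (by positivity)
    exact tendsto_nhdsWithin_iff.2 ⟨by simpa using hcont.continuousWithinAt.tendsto (x := a),
      .of_forall hnonneg⟩
  refine ⟨2 / |f'| * (K + 1), by positivity, ?_⟩
  filter_upwards [hs, hdist.eventually
    (eventually_exists_zero_of_hasDerivAt hderiv hf' h₀ (inter_mem hU hV))] with y hys hy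
  have hcont : ContinuousOn (fun x ↦ F (y, x)) (U ∩ V) :=
    hK.continuousOn.comp (by fun_prop) fun x hx ↦ hsV ⟨hys, hx.2⟩
  have hclose : ∀ x ∈ U ∩ V, |F (y, x) - F (a, x)| ≤ (K + 1) * dist y a := fun x hx ↦ by
    have := hK.dist_le_mul (y, x) (hsV ⟨hys, hx.2⟩) (a, x) (hsV ⟨has, hx.2⟩)
    rw [dist_prod_same_right, Real.dist_eq] at this
    linarith [dist_nonneg (x := y) (y := a)]
  obtain ⟨x, hx, hFx, hxx₀⟩ := hy _ hcont hclose
  exact ⟨x, hx.1, hFx, by rwa [mul_assoc]⟩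

end Zeros

section LambdaMin

open scoped Matrix.Norms.Elementwise MatrixOrder

lemma abs_dotProduct_mulVec_le {ι : Type*} [Fintype ι] (A : Matrix ι ι ℝ) (x : ι → ℝ) :
    |x ⬝ᵥ A *ᵥ x| ≤ Fintype.card ι * ‖A‖ * (x ⬝ᵥ x) := by
  calc |x ⬝ᵥ A *ᵥ x| ≤ ∑ i, ∑ j, |x i| * (‖A‖ * |x j|) := by
        simp only [dotProduct, mulVec, Finset.mul_sum]
        refine (Finset.abs_sum_le_sum_abs _ _).trans (Finset.sum_le_sum fun i _ ↦ ?_)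
        refine (Finset.abs_sum_le_sum_abs _ _).trans (Finset.sum_le_sum fun j _ ↦ ?_)
        rw [abs_mul, abs_mul]
        gcongr
        exact A.norm_entry_le_entrywise_sup_norm
    _ = ‖A‖ * (∑ i, |x i|) ^ 2 := by
        rw [sq, Finset.sum_mul_sum, Finset.mul_sum]
        simp only [Finset.mul_sum, mul_left_comm]
    _ ≤ ‖A‖ * (Fintype.card ι * ∑ i, |x i| ^ 2) := by
        gcongr
        exact sq_sum_le_card_mul_sum_sq
    _ = Fintype.card ι * ‖A‖ * (x ⬝ᵥ x) := by
        simp only [dotProduct, sq_abs, ← sq]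
        ring

lemma setOf_mulVec_eq_smul_eq_spectrum {ι : Type*} [Fintype ι] [DecidableEq ι] (A : Matrix ι ι ℝ) :
    {r : ℝ | ∃ v : ι → ℝ, v ≠ 0 ∧ A *ᵥ v = r • v} = spectrum ℝ A := by
  ext r
  rw [← Matrix.spectrum_toLin', ← Module.End.hasEigenvalue_iff_mem_spectrum]
  simp [Module.End.HasEigenvalue, Module.End.HasUnifEigenvalue, Submodule.ne_bot_iff, and_comm]

variable {n : ℕ} {A B : Matrix (Fin n) (Fin n) ℝ}

lemma lambdaMin_eq_sInf_spectrum (A : Matrix (Fin n) (Fin n) ℝ) :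
    lambdaMin A = sInf (spectrum ℝ A) := by
  rw [lambdaMin, setOf_mulVec_eq_smul_eq_spectrum]

lemma exists_mulVec_eq_lambdaMin_smul [NeZero n] (hA : A.IsSymm) :
    ∃ v : Fin n → ℝ, v ≠ 0 ∧ A *ᵥ v = lambdaMin A • v := by
  have hA : A.IsHermitian := hA
  have hne : (spectrum ℝ A).Nonempty := hA.spectrum_real_eq_range_eigenvalues ▸ Set.range_nonempty _
  have := hne.csInf_mem A.finite_real_spectrum
  rwa [← lambdaMin_eq_sInf_spectrum, ← setOf_mulVec_eq_smul_eq_spectrum] at this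

lemma lambdaMin_mul_dotProduct_self_le (hA : A.IsSymm) (x : Fin n → ℝ) :
    lambdaMin A * (x ⬝ᵥ x) ≤ x ⬝ᵥ A *ᵥ x := by
  have hA : IsSelfAdjoint A := hA
  have hle : algebraMap ℝ _ (lambdaMin A) ≤ A :=
    algebraMap_le_of_le_spectrum (fun r hr ↦ by
      rw [lambdaMin_eq_sInf_spectrum]
      exact csInf_le A.finite_real_spectrum.bddBelow hr)
  have := (Matrix.le_iff.1 hle).dotProduct_mulVec_nonneg x
  simpa [Algebra.algebraMap_eq_smul_one, sub_mulVec, smul_mulVec] using this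

lemma lambdaMin_le_lambdaMin_add [NeZero n] (hA : A.IsSymm) (hB : B.IsSymm) :
    lambdaMin B ≤ lambdaMin A + n * ‖B - A‖ := by
  obtain ⟨v, hv, hAv⟩ := exists_mulVec_eq_lambdaMin_smul hA
  have hvv : 0 < v ⬝ᵥ v := by simpa using dotProduct_star_self_pos_iff.2 hv
  refine le_of_mul_le_mul_right ?_ hvv
  calc lambdaMin B * (v ⬝ᵥ v) ≤ v ⬝ᵥ B *ᵥ v := lambdaMin_mul_dotProduct_self_le hB v
    _ = lambdaMin A * (v ⬝ᵥ v) + v ⬝ᵥ (B - A) *ᵥ v := by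
        rw [sub_mulVec, dotProduct_sub, hAv, dotProduct_smul, smul_eq_mul]
        ring
    _ ≤ lambdaMin A * (v ⬝ᵥ v) + n * ‖B - A‖ * (v ⬝ᵥ v) := by
        gcongr
        simpa using (le_abs_self _).trans (abs_dotProduct_mulVec_le (B - A) v)
    _ = (lambdaMin A + n * ‖B - A‖) * (v ⬝ᵥ v) := by ring

lemma lipschitzOnWith_lambdaMin [NeZero n] :
    LipschitzOnWith n lambdaMin {A : Matrix (Fin n) (Fin n) ℝ | A.IsSymm} :=
  LipschitzOnWith.of_le_add_mul _ fun A hA B hB ↦ by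
    simpa [dist_eq_norm] using lambdaMin_le_lambdaMin_add hB hA

end LambdaMin

section BetheHessian

open Set
open scoped Matrix.Norms.Elementwise

variable {n : ℕ} {W : Matrix (Fin n) (Fin n) ℝ}

lemma isSymm_betheH (hW : W.IsSymm) (β : ℝ) : (betheH W β).IsSymm := by
  have hS : (betheS W β).IsSymm := .ext fun i j ↦ by simp only [betheS, of_apply, hW.apply i j]
  exact (isSymm_one.add (isSymm_diagonal _)).sub hS

lemma contDiff_betheH {k : WithTop ℕ∞} :
    ContDiff ℝ k fun p : Matrix (Fin n) (Fin n) ℝ × ℝ ↦ betheH p.1 p.2 := by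
  refine contDiff_pi' fun i ↦ contDiff_pi' fun j ↦ ?_
  rcases eq_or_ne i j with rfl | hij
  · simp only [betheH, betheDTilde, betheS, Matrix.sub_apply, Matrix.add_apply,
      Matrix.diagonal_apply_eq, Matrix.of_apply]
    fun_prop
  · simp only [betheH, betheDTilde, betheS, Matrix.sub_apply, Matrix.add_apply,
      Matrix.diagonal_apply_ne _ hij, Matrix.of_apply]
    fun_prop

lemma locallyLipschitzOn_lambdaMin_betheH [NeZero n] :
    LocallyLipschitzOn ({W : Matrix (Fin n) (Fin n) ℝ | W.IsSymm} ×ˢ univ)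
      fun p ↦ lambdaMin (betheH p.1 p.2) := by
  rintro p -
  obtain ⟨K, t, ht, hK⟩ := contDiff_betheH.contDiffAt.exists_lipschitzOnWith (x := p)
  exact ⟨n * K, _, inter_mem_nhdsWithin _ ht,
    lipschitzOnWith_lambdaMin.comp (hK.mono inter_subset_right)
      fun q hq ↦ isSymm_betheH hq.1.1 q.2⟩

theorem nishimori_temperature_stability_general (hn : 1 ≤ n)
    (W E : Matrix (Fin n) (Fin n) ℝ) (hW : W.IsSymm) (βN : ℝ) (hβN : 0 < βN)
    (hroot : lambdaMin (betheH W βN) = 0)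
    (hdiff : DifferentiableAt ℝ (fun β : ℝ ↦ lambdaMin (betheH W β)) βN)
    (hnondeg : deriv (fun β : ℝ ↦ lambdaMin (betheH W β)) βN ≠ 0) :
    ∃ C > (0 : ℝ), ∃ ε₀ > (0 : ℝ), ∀ ε : ℝ, 0 < ε → ε ≤ ε₀ →
      ∀ Wt : Matrix (Fin n) (Fin n) ℝ, Wt.IsSymm → (∀ i j, |Wt i j - W i j| ≤ ε * E i j) →
        ∃ βtN : ℝ, 0 < βtN ∧ lambdaMin (betheH Wt βtN) = 0 ∧ |βtN - βN| ≤ C * ε := by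
  have : NeZero n := .of_pos hn
  obtain ⟨C, hC, hzero⟩ := exists_eventually_exists_zero_of_locallyLipschitzOn
    locallyLipschitzOn_lambdaMin_betheH hW hdiff.hasDerivAt hnondeg hroot (Ioi_mem_nhds hβN)
  obtain ⟨r, hr, hball⟩ := Metric.mem_nhdsWithin_iff.1 hzero
  refine ⟨C * (‖E‖ + 1), by positivity, r / (2 * (‖E‖ + 1)), by positivity,
    fun ε hε hε₀ Wt hWt hpert ↦ ?_⟩
  have hdist : dist Wt W ≤ ε * (‖E‖ + 1) := by
    rw [dist_eq_norm, Matrix.norm_le_iff (by positivity)]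
    intro i j
    have := (le_abs_self _).trans (E.norm_entry_le_entrywise_sup_norm (i := i) (j := j))
    exact (hpert i j).trans (by gcongr; linarith)
  have hsmall : ε * (‖E‖ + 1) < r := by
    rw [le_div_iff₀ (by positivity)] at hε₀
    linarith
  obtain ⟨β, hβ, hβroot, hββN⟩ := hball ⟨hdist.trans_lt hsmall, hWt⟩
  exact ⟨β, hβ, hβroot, hββN.trans (by rw [mul_assoc, mul_comm _ ε]; gcongr)⟩

end BetheHessian

/-- Stability of the Nishimori temperature under noise: if β_N > 0 is a
non-degenerate root of f(β) = λ_min(H(β; W)), then for every sufficiently small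
edgewise-relative perturbation W̃ of W, there is a Nishimori temperature β̃_N of
W̃ with |β̃_N - β_N| ≤ C·ε. -/
theorem nishimori_temperature_stability {n : ℕ} (hn : 1 ≤ n)
    (W : Matrix (Fin n) (Fin n) ℝ) (hW : W.IsSymm) (hdiag : ∀ i, W i i = 0)
    (βN : ℝ) (hβN : 0 < βN)
    (hroot : lambdaMin (betheH W βN) = 0)
    (hdiff : DifferentiableAt ℝ (fun β : ℝ => lambdaMin (betheH W β)) βN)
    (hnondeg : deriv (fun β : ℝ => lambdaMin (betheH W β)) βN ≠ 0) :
    ∃ C > (0 : ℝ), ∃ ε₀ > (0 : ℝ), ∀ ε : ℝ, 0 < ε → ε ≤ ε₀ →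
      ∀ Wt : Matrix (Fin n) (Fin n) ℝ,
        Wt.IsSymm → (∀ i, Wt i i = 0) →
        (∀ i j, |Wt i j - W i j| ≤ ε * |W i j|) →
        ∃ βtN : ℝ, 0 < βtN ∧ lambdaMin (betheH Wt βtN) = 0 ∧
          |βtN - βN| ≤ C * ε := by
  obtain ⟨C, hC, ε₀, hε₀, H⟩ := nishimori_temperature_stability_general hn W (W.map abs) hW βN
    hβN hroot hdiff hnondeg
  exact ⟨C, hC, ε₀, hε₀, fun ε hε hεε₀ Wt hWt _ ↦ H ε hε hεε₀ Wt hWt⟩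
end
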